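/- arXiv:2311.18745 — 3 statements merged into one kernel-verified Lean document; each statement's English description precedes it below -/
import Mathlib

section
/- Let k be a field, V a k-vector space, d : V → V a linear map with d ∘ d = 0, and let {0} = F_0 ⊆ F_1 ⊆ ... ⊆ F_n = V be a filtration by subspaces with d(F_i) ⊆ F_i for every i. If x ∈ ker d and x ∉ im d (i.e. the homology class of x is nonzero), then there exist an index i with 1 ≤ i ≤ n and an element y ∈ V such that x − d(y) lies in F_i and the image of x − d(y) in the quotient F_i/F_{i−1} is a cycle for the induced differential whose homology class in H(F_i/F_{i−1}) is nonzero. -/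
/-- Given a differential `d` on `M` and a family of `d`-invariant submodules `F`,
the differential induced by `d` on the filtration quotient `F i / F (i-1)`. -/
noncomputable def inducedDiff {k M : Type*} [Field k] [AddCommGroup M] [Module k M]
    (d : M →ₗ[k] M) (F : ℕ → Submodule k M)
    (hdF : ∀ i, ∀ x ∈ F i, d x ∈ F i) (i : ℕ) :
    ((F i) ⧸ (F (i - 1)).comap (F i).subtype) →ₗ[k]
      ((F i) ⧸ (F (i - 1)).comap (F i).subtype) :=
  Submodule.mapQ _ _ (d.restrict (hdF i)) (by
    intro x hx
    simp only [Submodule.mem_comap, LinearMap.restrict_coe_apply] at *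
    exact hdF (i - 1) _ hx)

/-!
Consider the first index `i` at which the class of `x` comes from `F i`, that is, at which
`x ∈ F i ⊔ range d`. There `x` is congruent modulo `range d` to an element of `F i`; were that
element a boundary in `F i / F (i - 1)`, then `x` would already lie in `F (i - 1) ⊔ range d`.
-/

section Subquotient

variable {R M : Type*} [Ring R] [AddCommGroup M] [Module R M]
  (d : M →ₗ[R] M) {P Q : Submodule R M} (hP : ∀ x ∈ P, d x ∈ P) (hQ : ∀ x ∈ Q, d x ∈ Q)

/-- The endomorphism induced by `d` on the subquotient `P / (P ∩ Q)` of two `d`-invariant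
submodules, used for the differential of a filtration quotient. Taking the preimage of `Q` in `P`
avoids assuming `Q ≤ P`. -/
def subquotientMap : (P ⧸ Q.comap P.subtype) →ₗ[R] (P ⧸ Q.comap P.subtype) :=
  Submodule.mapQ _ _ (d.restrict hP) fun x hx => hQ x hx

theorem mk_mem_ker_subquotientMap_iff (v : P) :
    Submodule.Quotient.mk v ∈ LinearMap.ker (subquotientMap d hP hQ) ↔ d v ∈ Q :=
  Submodule.Quotient.mk_eq_zero _

theorem mk_mem_range_subquotientMap_iff (v : P) :
    Submodule.Quotient.mk v ∈ LinearMap.range (subquotientMap d hP hQ) ↔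
      (v : M) ∈ Q ⊔ P.map d := by
  have mk_eq_iff (z : P) : subquotientMap d hP hQ (Submodule.Quotient.mk z) =
      Submodule.Quotient.mk v ↔ (v : M) - d z ∈ Q :=
    eq_comm.trans (Submodule.Quotient.eq _)
  rw [LinearMap.mem_range, (Submodule.Quotient.mk_surjective _).exists, Submodule.mem_sup']
  simp only [mk_eq_iff]
  constructor
  · rintro ⟨z, hz⟩
    exact ⟨⟨v - d z, hz⟩, ⟨d z, Submodule.mem_map_of_mem z.2⟩, sub_add_cancel _ _⟩
  · rintro ⟨q, ⟨_, z, hz, rfl⟩, hqz⟩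
    exact ⟨⟨z, hz⟩, by simp [← hqz]⟩

end Subquotient

theorem exists_lt_not_and_succ {p : ℕ → Prop} {n : ℕ} (h0 : ¬p 0) (hn : p n) :
    ∃ i < n, ¬p i ∧ p (i + 1) := by
  by_contra! h
  have not_p (i : ℕ) (hi : i ≤ n) : ¬p i := by
    induction i with
    | zero => exact h0
    | succ i ih => exact h i hi (ih (Nat.le_of_succ_le hi))
  exact not_p n le_rfl hn

theorem exists_nonzero_class_in_filtration_quotient_general
    {R M : Type*} [Ring R] [AddCommGroup M] [Module R M]
    (d : M →ₗ[R] M) (hd2 : d ∘ₗ d = 0) {n : ℕ} (F : ℕ → Submodule R M)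
    (hdF : ∀ i, ∀ x ∈ F i, d x ∈ F i) {x : M} (hx : d x = 0)
    (hx0 : x ∉ F 0 ⊔ LinearMap.range d) (hxn : x ∈ F n ⊔ LinearMap.range d) :
    ∃ i < n, ∃ y : M, ∃ h : x - d y ∈ F (i + 1),
      Submodule.Quotient.mk ⟨x - d y, h⟩ ∈
        LinearMap.ker (subquotientMap d (hdF (i + 1)) (hdF i)) ∧
      Submodule.Quotient.mk ⟨x - d y, h⟩ ∉
        LinearMap.range (subquotientMap d (hdF (i + 1)) (hdF i)) := by
  obtain ⟨i, hi, hxi, hxi'⟩ :=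
    exists_lt_not_and_succ (p := fun i => x ∈ F i ⊔ LinearMap.range d) hx0 hxn
  obtain ⟨u, hu, _, ⟨y, rfl⟩, huy⟩ := Submodule.mem_sup.1 hxi'
  have hxy : x - d y ∈ F (i + 1) := by rwa [← huy, add_sub_cancel_right]
  refine ⟨i, hi, y, hxy, ?_, fun hboundary => ?_⟩
  · have hcycle : d (x - d y) = 0 := by
      rw [map_sub, hx, ← LinearMap.comp_apply, hd2, LinearMap.zero_apply, sub_zero]
    rw [mk_mem_ker_subquotientMap_iff, hcycle]
    exact (F i).zero_mem
  · have hle : F i ⊔ (F (i + 1)).map d ≤ F i ⊔ LinearMap.range d :=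
      sup_le_sup_left LinearMap.map_le_range _
    have hxyi : x - d y ∈ F i ⊔ LinearMap.range d :=
      hle ((mk_mem_range_subquotientMap_iff d _ _ _).1 hboundary)
    have hdy : d y ∈ F i ⊔ LinearMap.range d :=
      Submodule.mem_sup_right (LinearMap.mem_range_self d y)
    exact hxi ((Submodule.sub_mem_iff_left _ hdy).1 hxyi)

/-- If `{0} = F 0 ⊆ F 1 ⊆ ... ⊆ F n = V` is a filtration of a complex `(V, d)` by
`d`-invariant subspaces and `x` is a cycle whose homology class is nonzero, then, after
modifying `x` by a boundary `d y`, it lands in some `F i` (`1 ≤ i ≤ n`) and its image in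
`F i / F (i-1)` is a cycle with nonzero homology class for the induced differential. -/
theorem exists_nonzero_class_in_filtration_quotient
    {k M : Type*} [Field k] [AddCommGroup M] [Module k M]
    (d : M →ₗ[k] M) (hd2 : d ∘ₗ d = 0) (n : ℕ)
    (F : ℕ → Submodule k M) (hF0 : F 0 = ⊥) (hFn : F n = ⊤) (hmono : Monotone F)
    (hdF : ∀ i, ∀ x ∈ F i, d x ∈ F i)
    (x : M) (hx : d x = 0) (hx' : x ∉ LinearMap.range d) :
    ∃ i, 1 ≤ i ∧ i ≤ n ∧ ∃ y : M, ∃ h : x - d y ∈ F i,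
      inducedDiff d F hdF i (Submodule.Quotient.mk ⟨x - d y, h⟩) = 0 ∧
      Submodule.Quotient.mk ⟨x - d y, h⟩ ∉
        LinearMap.range (inducedDiff d F hdF i) := by
  obtain ⟨i, hi, y, h, hker, hrange⟩ := exists_nonzero_class_in_filtration_quotient_general
    d hd2 (n := n) F hdF hx (by simpa [hF0] using hx') (by simp [hFn])
  exact ⟨i + 1, Nat.le_add_left 1 i, hi, y, h, hker, hrange⟩
end

section
/- Let k be a field, V a k-vector space, d : V → V a linear map with d ∘ d = 0, and let {0} = F_0 ⊆ F_1 ⊆ ... ⊆ F_n = V be a filtration by subspaces with d(F_i) ⊆ F_i for every i. If the homology of every filtration quotient vanishes, i.e. H(F_i/F_{i−1}) = 0 for all i = 1, ..., n, then the homology of (V, d) vanishes: ker d = im d. -/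
section Subquotient

variable {R M : Type*} [Ring R] [AddCommGroup M] [Module R M] (d : M →ₗ[R] M)

/-- The endomorphism of the subquotient `N / (N ⊓ P)` induced by an endomorphism `d` that preserves
`N` and `P`; for `P ≤ N` this is the map that `d` induces on `N / P`. -/
def subquotientEnd (N P : Submodule R M) (hN : ∀ x ∈ N, d x ∈ N) (hP : ∀ x ∈ P, d x ∈ P) :
    (N ⧸ P.comap N.subtype) →ₗ[R] (N ⧸ P.comap N.subtype) :=
  Submodule.mapQ _ _ (d.restrict hN) fun x hx => hP x hx

variable {d}

theorem inf_comap_le_sup_map_of_ker_subquotientEnd_le_range {N P : Submodule R M}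
    {hN : ∀ x ∈ N, d x ∈ N} {hP : ∀ x ∈ P, d x ∈ P}
    (hH : LinearMap.ker (subquotientEnd d N P hN hP) ≤
      LinearMap.range (subquotientEnd d N P hN hP)) :
    N ⊓ P.comap d ≤ P ⊔ N.map d := by
  rintro x ⟨hxN, hdx⟩
  have class_mem_ker : Submodule.Quotient.mk ⟨x, hxN⟩ ∈
      LinearMap.ker (subquotientEnd d N P hN hP) :=
    (Submodule.Quotient.mk_eq_zero _).2 hdx
  obtain ⟨q, hq⟩ := hH class_mem_ker
  obtain ⟨y, rfl⟩ := Submodule.Quotient.mk_surjective _ q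
  have sub_mem : x - d y ∈ P := (Submodule.Quotient.eq (P.comap N.subtype)).1 hq.symm
  exact Submodule.mem_sup.2
    ⟨x - d y, sub_mem, d y, Submodule.mem_map_of_mem y.2, sub_add_cancel x (d y)⟩

theorem inf_ker_le_range_of_subquotientEnd {N P : Submodule R M}
    {hN : ∀ x ∈ N, d x ∈ N} {hP : ∀ x ∈ P, d x ∈ P} (hd2 : d ∘ₗ d = 0)
    (hH : LinearMap.ker (subquotientEnd d N P hN hP) ≤
      LinearMap.range (subquotientEnd d N P hN hP))
    (hPrange : P ⊓ LinearMap.ker d ≤ LinearMap.range d) :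
    N ⊓ LinearMap.ker d ≤ LinearMap.range d := by
  have cycles_le : N ⊓ LinearMap.ker d ≤ LinearMap.range d ⊔ P :=
    calc N ⊓ LinearMap.ker d
        ≤ N ⊓ P.comap d := inf_le_inf_left N (LinearMap.ker_le_comap d)
      _ ≤ P ⊔ N.map d := inf_comap_le_sup_map_of_ker_subquotientEnd_le_range hH
      _ ≤ P ⊔ LinearMap.range d := sup_le_sup_left LinearMap.map_le_range P
      _ = LinearMap.range d ⊔ P := sup_comm _ _
  -- Subtracting a boundary from a cycle leaves a cycle: this is the modular law for `im d ≤ ker d`.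
  calc N ⊓ LinearMap.ker d
      ≤ (LinearMap.range d ⊔ P) ⊓ LinearMap.ker d := le_inf cycles_le inf_le_right
    _ = LinearMap.range d ⊔ P ⊓ LinearMap.ker d :=
        sup_inf_assoc_of_le P (LinearMap.range_le_ker_iff.2 hd2)
    _ ≤ LinearMap.range d := sup_le le_rfl hPrange

theorem homology_eq_zero_of_filtration_quotients_general (hd2 : d ∘ₗ d = 0) (n : ℕ)
    (F : ℕ → Submodule R M) (hF0 : F 0 = ⊥) (hFn : F n = ⊤)
    (hdF : ∀ i, ∀ x ∈ F i, d x ∈ F i)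
    (hH : ∀ i < n,
      LinearMap.ker (subquotientEnd d (F (i + 1)) (F i) (hdF (i + 1)) (hdF i)) ≤
        LinearMap.range (subquotientEnd d (F (i + 1)) (F i) (hdF (i + 1)) (hdF i))) :
    LinearMap.ker d = LinearMap.range d := by
  have cycles_le_range : ∀ i ≤ n, F i ⊓ LinearMap.ker d ≤ LinearMap.range d := by
    intro i
    induction i with
    | zero => simp [hF0]
    | succ i ih =>
      exact fun hi => inf_ker_le_range_of_subquotientEnd hd2 (hH i hi) (ih (Nat.le_of_succ_le hi))
  refine le_antisymm ?_ (LinearMap.range_le_ker_iff.2 hd2)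
  simpa only [hFn, top_inf_eq] using cycles_le_range n le_rfl

end Subquotient

/-- If `{0} = F 0 ⊆ F 1 ⊆ ... ⊆ F n = V` is a filtration of a complex `(V, d)` by
`d`-invariant subspaces and the homology of every filtration quotient vanishes
(every cycle of the induced differential is a boundary), then the homology of
`(V, d)` vanishes: `ker d = im d`. -/
theorem homology_eq_zero_of_filtration_quotients
    {k M : Type*} [Field k] [AddCommGroup M] [Module k M]
    (d : M →ₗ[k] M) (hd2 : d ∘ₗ d = 0) (n : ℕ)
    (F : ℕ → Submodule k M) (hF0 : F 0 = ⊥) (hFn : F n = ⊤) (hmono : Monotone F)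
    (hdF : ∀ i, ∀ x ∈ F i, d x ∈ F i)
    (hH : ∀ i, 1 ≤ i → i ≤ n →
      LinearMap.ker (inducedDiff d F hdF i) ≤ LinearMap.range (inducedDiff d F hdF i)) :
    LinearMap.ker d = LinearMap.range d := by
  exact homology_eq_zero_of_filtration_quotients_general hd2 n F hF0 hFn hdF
    fun i hi => hH (i + 1) (Nat.le_add_left 1 i) hi
end

section
/- Let n ≥ 1 be a natural number. In the free Lie algebra over ℚ on n generators x_0, ..., x_{n−1}, the family of (n−1)! iterated brackets indexed by permutations σ of {0, ..., n−2}, where the element associated to σ is the right-nested bracket [x_{σ(0)}, [x_{σ(1)}, [ ..., [x_{σ(n−2)}, x_{n−1}] ... ]]] (with the fixed generator x_{n−1} innermost), is linearly independent. -/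
/-- The right-nested iterated bracket
`[x_{σ(0)}, [x_{σ(1)}, [ …, [x_{σ(n-2)}, x_{n-1}] … ]]]` in the free Lie algebra over `ℚ`
on `n` generators, associated to a permutation `σ` of `{0, …, n-2}` (for `n = 1` it is
just the generator `x_0`). -/
noncomputable def rightNestedBracket (n : ℕ) (hn : 1 ≤ n)
    (σ : Equiv.Perm (Fin (n - 1))) : FreeLieAlgebra ℚ (Fin n) :=
  (List.ofFn fun j : Fin (n - 1) => Fin.castLE (Nat.sub_le n 1) (σ j)).foldr
    (fun i acc => ⁅FreeLieAlgebra.of ℚ i, acc⁆)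
    (FreeLieAlgebra.of ℚ ⟨n - 1, by omega⟩)

/-!
Let the free Lie algebra on `X` act on the span of all words so that each letter `i` acts by
prepending itself, except that the letters other than a fixed `a` annihilate the empty word. If a
word `l` avoids `a`, then in the commutators making up the right-nested bracket along `l` with `a`
innermost only the terms survive in which `a` acts on the empty word first, so this bracket sends
the empty word to the basis vector `l ++ [a]`. Distinct words give distinct basis vectors.
-/

section LieModule

variable {ι L M : Type*} [LieRing L] [AddCommGroup M] [LieRingModule L M]

theorem foldr_lie_lie_of_forall_lie_eq_zero (x : ι → L) (y : L) (m : M) (l : List ι)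
    (hl : ∀ i ∈ l, ⁅x i, m⁆ = 0) :
    ⁅l.foldr (fun i z => ⁅x i, z⁆) y, m⁆ = l.foldr (fun i u => ⁅x i, u⁆) ⁅y, m⁆ := by
  induction l with
  | nil => rfl
  | cons i l ih =>
    obtain ⟨hi, hl'⟩ := List.forall_mem_cons.mp hl
    rw [List.foldr_cons, List.foldr_cons, lie_lie, hi, lie_zero, sub_zero, ih hl']

end LieModule

theorem map_foldr_lie {R ι L L' : Type*} [CommRing R] [LieRing L] [LieAlgebra R L]
    [LieRing L'] [LieAlgebra R L'] (f : L →ₗ⁅R⁆ L') (x : ι → L) (y : L) (l : List ι) :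
    f (l.foldr (fun i z => ⁅x i, z⁆) y) = l.foldr (fun i z => ⁅f (x i), z⁆) (f y) :=
  (List.foldr_hom f fun i z => (f.map_lie (x i) z).symm).symm

section PrependOperator

variable (R : Type*) [Semiring R] {X : Type*} [DecidableEq X]

/-- The operator by which the letter `i` acts on the free module with basis the words in `X`: it
prepends `i`, except that it annihilates the empty word when `i ≠ a`. -/
noncomputable def prependOperator (a i : X) : Module.End R (List X →₀ R) :=
  Finsupp.linearCombination R fun w : List X =>
    if w = [] ∧ i ≠ a then 0 else Finsupp.single (i :: w) 1

theorem prependOperator_single_nil_of_ne {a i : X} (hi : i ≠ a) :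
    prependOperator R a i (Finsupp.single [] 1) = 0 := by
  simp [prependOperator, hi]

theorem prependOperator_single_nil_self (a : X) :
    prependOperator R a a (Finsupp.single [] 1) = Finsupp.single [a] 1 := by
  simp [prependOperator]

theorem prependOperator_single_of_ne_nil (a i : X) {w : List X} (hw : w ≠ []) :
    prependOperator R a i (Finsupp.single w 1) = Finsupp.single (i :: w) 1 := by
  simp [prependOperator, hw]

theorem foldr_prependOperator_single (a : X) (l : List X) {w : List X} (hw : w ≠ []) :
    l.foldr (fun i v => prependOperator R a i v) (Finsupp.single w 1) =
      Finsupp.single (l ++ w) 1 := by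
  induction l with
  | nil => rfl
  | cons i l ih =>
    rw [List.foldr_cons, ih, List.cons_append,
      prependOperator_single_of_ne_nil R a i (List.append_ne_nil_of_right_ne_nil l hw)]

end PrependOperator

section ActOnEmptyWord

attribute [local instance] LieRing.ofAssociativeRing

variable (R : Type*) [CommRing R] {X : Type*} [DecidableEq X]

/-- The action of the free Lie algebra on the empty word, where each generator `i` acts by
`prependOperator R a i`. -/
noncomputable def actOnEmptyWord (a : X) : FreeLieAlgebra R X →ₗ[R] (List X →₀ R) :=
  LinearMap.applyₗ (Finsupp.single [] 1) ∘ₗ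
    (FreeLieAlgebra.lift R (prependOperator R a)).toLinearMap

theorem actOnEmptyWord_foldr_lie (a : X) {l : List X} (hl : a ∉ l) :
    actOnEmptyWord R a
        (l.foldr (fun i y => ⁅FreeLieAlgebra.of R i, y⁆) (FreeLieAlgebra.of R a)) =
      Finsupp.single (l ++ [a]) 1 := by
  have hnil : ∀ i ∈ l, ⁅prependOperator R a i, Finsupp.single ([] : List X) (1 : R)⁆ = 0 :=
    fun i hi => prependOperator_single_nil_of_ne R (ne_of_mem_of_not_mem hi hl)
  simp only [actOnEmptyWord, LinearMap.comp_apply, LinearMap.applyₗ_apply_apply,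
    LieHom.coe_toLinearMap, map_foldr_lie, FreeLieAlgebra.lift_of_apply]
  calc
    ⁅l.foldr (fun i f => ⁅prependOperator R a i, f⁆) (prependOperator R a a),
          Finsupp.single ([] : List X) (1 : R)⁆
      = l.foldr (fun i v => ⁅prependOperator R a i, v⁆)
          ⁅prependOperator R a a, Finsupp.single ([] : List X) (1 : R)⁆ :=
      foldr_lie_lie_of_forall_lie_eq_zero _ _ _ l hnil
    _ = l.foldr (fun i v => prependOperator R a i v) (Finsupp.single [a] 1) := by
      simp only [Module.End.lie_apply, prependOperator_single_nil_self]
    _ = Finsupp.single (l ++ [a]) 1 :=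
      foldr_prependOperator_single R a l (List.cons_ne_nil a [])

end ActOnEmptyWord

theorem rightNestedBrackets_linearIndependent_general (R : Type*) [CommRing R] {X : Type*}
    (a : X) :
    LinearIndependent R fun l : {l : List X // a ∉ l} =>
      (l : List X).foldr (fun i y => ⁅FreeLieAlgebra.of R i, y⁆) (FreeLieAlgebra.of R a) := by
  classical
  have happend : Function.Injective fun l : {l : List X // a ∉ l} => (l : List X) ++ [a] :=
    (List.append_left_injective [a]).comp Subtype.val_injective
  refine LinearIndependent.of_comp (actOnEmptyWord R a) ?_
  convert (Finsupp.linearIndependent_single_one R (List X)).comp _ happend using 1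
  funext l
  exact actOnEmptyWord_foldr_lie R a l.2

/-- The word `σ(0) ⋯ σ(n-2)` in the letters `0, …, n-1`, bundled with the fact that it avoids the
last letter `n-1`. -/
def permWord (n : ℕ) (hn : 1 ≤ n) (σ : Equiv.Perm (Fin (n - 1))) :
    {l : List (Fin n) // (⟨n - 1, by omega⟩ : Fin n) ∉ l} :=
  ⟨List.ofFn fun j => Fin.castLE (Nat.sub_le n 1) (σ j), by
    simp only [List.mem_ofFn, not_exists, Fin.ext_iff, Fin.val_castLE]
    exact fun j => (σ j).isLt.ne⟩

theorem permWord_injective (n : ℕ) (hn : 1 ≤ n) : Function.Injective (permWord n hn) := by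
  intro σ τ h
  have hletters := List.ofFn_injective (congrArg Subtype.val h)
  exact Equiv.ext fun j => Fin.castLE_injective _ (congrFun hletters j)

/-- In the free Lie algebra over `ℚ` on `n ≥ 1` generators, the `(n-1)!` right-nested
brackets `[x_{σ(0)}, [x_{σ(1)}, [ …, [x_{σ(n-2)}, x_{n-1}] … ]]]`, indexed by
permutations `σ` of `{0, …, n-2}`, are linearly independent.
(This is the linear-independence half of `dim Lie(n) = (n-1)!`.) -/
theorem rightNestedBrackets_linearIndependent (n : ℕ) (hn : 1 ≤ n) :
    LinearIndependent ℚ (fun σ : Equiv.Perm (Fin (n - 1)) =>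
      rightNestedBracket n hn σ) :=
  (rightNestedBrackets_linearIndependent_general ℚ _).comp (permWord n hn) (permWord_injective n hn)
end
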